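/- arXiv:1208.2536 — 2 statements merged into one kernel-verified Lean document; each statement's English description precedes it below -/
import Mathlib

section
/- Fix a real number β > 0 and let γ ∈ {1, −1} (so γ² = 1). Then the polynomials defined for n ∈ ℕ and x ∈ ℝ by p_{2n}(x) = (−γ)^{n} · √((β)_n / n!) · ∑_{j=0}^{n} (−n)_j x^{2j} / ((β)_j j!) and p_{2n+1}(x) = x · (−γ)^{n} · √((β+1)_n / (n! β)) · ∑_{j=0}^{n} (−n)_j x^{2j} / ((β+1)_j j!) satisfy p_0(x) = 1 and, for all n ≥ 0 (with the convention p_{−1}(x) = 0), the three-term recurrences x·p_{2n}(x) = S_n·p_{2n−1}(x) + R_n·p_{2n+1}(x) and x·p_{2n+1}(x) = R_n·p_{2n}(x) + S_{n+1}·p_{2n+2}(x), where R_n = √(β+n) and S_n = γ√n. -/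
/-!
Write `F n = ₁F₁(-n; β; x²)` and `G n = ₁F₁(-n; β + 1; x²)`. Both recurrences are rescalings of
contiguous relations between these polynomials:

* `β F n = (β + n) G n - n G (n - 1)`,
* `x² G n = β (F n - F (n + 1))`.

Each holds coefficient by coefficient in `x²`, because of `(a)_{n+1} = a (a+1)_n` (`poch_succ_left`).
The same identity for `(β)_{n+1}` shows that the normalising factors
`√((β)_n / n!)` and `√((β+1)_n / (n! β))` turn the irrational coefficients `√(β + n)` and `√n`
into the rational coefficients of the contiguous relations.
-/

noncomputable section

open Finset

/-- Pochhammer symbol `(a)_n = a(a+1)⋯(a+n-1)`. -/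
def poch (a : ℝ) : ℕ → ℝ
  | 0 => 1
  | n + 1 => poch a n * (a + n)

theorem poch_succ_left (a : ℝ) (n : ℕ) : poch a (n + 1) = a * poch (a + 1) n := by
  induction n with
  | zero => simp [poch]
  | succ n ih =>
    rw [poch, ih, poch]
    push_cast
    ring

theorem poch_pos {a : ℝ} (ha : 0 < a) (n : ℕ) : 0 < poch a n := by
  induction n with
  | zero => simp [poch]
  | succ n ih => rw [poch]; positivity

/-- The terminating confluent hypergeometric polynomial `₁F₁(-n; b; x²)`, as a function of `x`. -/
def hyp (b : ℝ) (n : ℕ) (x : ℝ) : ℝ :=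
  ∑ j ∈ range (n + 1), poch (-(n : ℝ)) j * x ^ (2 * j) / (poch b j * j.factorial)

/-- The series defining `₁F₁(-n; b; x²)` may be summed one term further, since `(-n)_{n+1} = 0`. -/
theorem hyp_eq_sum_succ (b : ℝ) (n : ℕ) (x : ℝ) :
    hyp b n x =
      ∑ j ∈ range (n + 2), poch (-(n : ℝ)) j * x ^ (2 * j) / (poch b j * j.factorial) := by
  rw [sum_range_succ _ (n + 1), hyp]
  simp [poch]

theorem hyp_contiguous_even {β : ℝ} (hβ : 0 < β) (n : ℕ) (x : ℝ) :
    β * hyp β (n + 1) x =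
      (β + n + 1) * hyp (β + 1) (n + 1) x - (n + 1) * hyp (β + 1) n x := by
  rw [hyp_eq_sum_succ _ n, hyp, hyp, mul_sum, mul_sum, mul_sum, ← sum_sub_distrib]
  refine sum_congr rfl fun j _ => ?_
  have h1 : poch β j * (β + j) = β * poch (β + 1) j := poch_succ_left β j
  have h2 : poch (-((n + 1 : ℕ) : ℝ)) j * (-((n + 1 : ℕ) : ℝ) + j)
      = -((n + 1 : ℕ) : ℝ) * poch (-(n : ℝ)) j := by
    have h := poch_succ_left (-((n + 1 : ℕ) : ℝ)) j
    rwa [show -((n + 1 : ℕ) : ℝ) + 1 = -(n : ℝ) by push_cast; ring] at h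
  have p1 := (poch_pos hβ j).ne'
  have p2 := (poch_pos (by linarith : 0 < β + 1) j).ne'
  have p3 : (j.factorial : ℝ) ≠ 0 := by positivity
  generalize poch (-((n + 1 : ℕ) : ℝ)) j = Q at *
  push_cast at h2
  field_simp
  linear_combination x ^ (2 * j) * (-Q * h1 + poch β j * h2)

theorem hyp_contiguous_odd {β : ℝ} (hβ : 0 < β) (n : ℕ) (x : ℝ) :
    x ^ 2 * hyp (β + 1) n x = β * (hyp β n x - hyp β (n + 1) x) := by
  rw [hyp_eq_sum_succ β n, hyp, hyp, ← sum_sub_distrib, mul_sum, mul_sum,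
    sum_range_succ' _ (n + 1)]
  simp only [poch, mul_zero, sub_self, add_zero]
  refine sum_congr rfl fun j _ => ?_
  have h1 : poch β j * (β + j) = β * poch (β + 1) j := poch_succ_left β j
  have h2 : poch (-((n + 1 : ℕ) : ℝ)) j * (-((n + 1 : ℕ) : ℝ) + j)
      = -((n + 1 : ℕ) : ℝ) * poch (-(n : ℝ)) j := by
    have h := poch_succ_left (-((n + 1 : ℕ) : ℝ)) j
    rwa [show -((n + 1 : ℕ) : ℝ) + 1 = -(n : ℝ) by push_cast; ring] at h
  have p2 := (poch_pos (by linarith : 0 < β + 1) j).ne'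
  have p3 : (j.factorial : ℝ) ≠ 0 := by positivity
  rw [h1, h2, Nat.factorial_succ]
  push_cast
  field_simp
  ring

/-- `√(β + n)` times the odd normalising factor, in terms of the even one. -/
theorem sqrt_mul_odd_factor {β : ℝ} (hβ : 0 < β) (n : ℕ) :
    √(β + n) * √(poch (β + 1) n / (n.factorial * β)) =
      (β + n) / β * √(poch β n / n.factorial) := by
  have h1 : poch β n * (β + n) = β * poch (β + 1) n := poch_succ_left β n
  have h : 0 ≤ (β + n) / β := by positivity
  rw [← Real.sqrt_mul (by positivity), ← Real.sqrt_sq h, ← Real.sqrt_mul (by positivity)]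
  congr 1
  field_simp
  linear_combination -h1

/-- `√(n + 1)` times the odd normalising factor of index `n`, in terms of the even one of index
`n + 1`. -/
theorem sqrt_succ_mul_odd_factor {β : ℝ} (hβ : 0 < β) (n : ℕ) :
    √((n : ℝ) + 1) * √(poch (β + 1) n / (n.factorial * β)) =
      (n + 1) / β * √(poch β (n + 1) / (n + 1).factorial) := by
  have h : 0 ≤ ((n : ℝ) + 1) / β := by positivity
  rw [← Real.sqrt_mul (by positivity), ← Real.sqrt_sq h, ← Real.sqrt_mul (by positivity),
    poch_succ_left, Nat.factorial_succ]
  congr 1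
  push_cast
  field_simp

/-- `√(β + n)` times the even normalising factor, in terms of the odd one. -/
theorem sqrt_mul_even_factor {β : ℝ} (hβ : 0 < β) (n : ℕ) :
    √(β + n) * √(poch β n / n.factorial) =
      β * √(poch (β + 1) n / (n.factorial * β)) := by
  have h1 : poch β n * (β + n) = β * poch (β + 1) n := poch_succ_left β n
  rw [← Real.sqrt_mul (by positivity), ← Real.sqrt_sq hβ.le, ← Real.sqrt_mul (by positivity),
    Real.sqrt_sq hβ.le]
  congr 1
  field_simp
  linear_combination h1

/-- `√(n + 1)` times the even normalising factor of index `n + 1`, in terms of the odd one of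
index `n`. -/
theorem sqrt_succ_mul_even_factor {β : ℝ} (hβ : 0 < β) (n : ℕ) :
    √((n : ℝ) + 1) * √(poch β (n + 1) / (n + 1).factorial) =
      β * √(poch (β + 1) n / (n.factorial * β)) := by
  rw [← Real.sqrt_mul (by positivity), ← Real.sqrt_sq hβ.le, ← Real.sqrt_mul (by positivity),
    Real.sqrt_sq hβ.le, poch_succ_left, Nat.factorial_succ]
  congr 1
  push_cast
  field_simp

theorem stmt_1 (β γ : ℝ) (hβ : 0 < β) (hγ : γ = 1 ∨ γ = -1)
    (p : ℕ → ℝ → ℝ)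
    (hpe : ∀ (n : ℕ) (x : ℝ), p (2 * n) x =
      (-γ) ^ n * Real.sqrt (poch β n / n.factorial) *
      ∑ j ∈ range (n + 1),
        poch (-(n : ℝ)) j * x ^ (2 * j) / (poch β j * j.factorial))
    (hpo : ∀ (n : ℕ) (x : ℝ), p (2 * n + 1) x =
      x * ((-γ) ^ n * Real.sqrt (poch (β + 1) n / (n.factorial * β)) *
      ∑ j ∈ range (n + 1),
        poch (-(n : ℝ)) j * x ^ (2 * j) / (poch (β + 1) j * j.factorial))) :
    (∀ x : ℝ, p 0 x = 1) ∧
    (∀ (n : ℕ) (x : ℝ), x * p (2 * n) x =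
      γ * Real.sqrt n * p (2 * n - 1) x + Real.sqrt (β + n) * p (2 * n + 1) x) ∧
    (∀ (n : ℕ) (x : ℝ), x * p (2 * n + 1) x =
      Real.sqrt (β + n) * p (2 * n) x + γ * Real.sqrt (n + 1) * p (2 * n + 2) x) := by
  have hγ2 : γ ^ 2 = 1 := by rcases hγ with h | h <;> simp [h]
  have he : ∀ n x, p (2 * n) x = (-γ) ^ n * √(poch β n / n.factorial) * hyp β n x := hpe
  have ho : ∀ n x, p (2 * n + 1) x =
      x * ((-γ) ^ n * √(poch (β + 1) n / (n.factorial * β)) * hyp (β + 1) n x) := hpo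
  refine ⟨fun x => ?_, fun n x => ?_, fun n x => ?_⟩
  · simpa [hyp, poch] using he 0 x
  · rw [he, ho]
    have hR := sqrt_mul_odd_factor hβ n
    cases n with
    | zero =>
      -- The truncated index `2 * 0 - 1` is harmless: its coefficient is `√0 = 0`.
      have h0 : √(β + (0 : ℕ)) * √(poch (β + 1) 0 / ((0 : ℕ).factorial * β)) = 1 := by
        rw [hR]; simp [poch, hβ.ne']
      have h1 : ∀ b, hyp b 0 x = 1 := fun b => by simp [hyp, poch]
      rw [h1, h1, show poch β 0 = 1 from rfl]
      simp only [Nat.cast_zero, Real.sqrt_zero, pow_zero, Nat.factorial_zero, Nat.cast_one,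
        div_one, Real.sqrt_one] at h0 ⊢
      linear_combination (-x) * h0
    | succ n =>
      have hS := sqrt_succ_mul_odd_factor hβ n
      have hc := hyp_contiguous_even hβ n x
      have hc' : hyp β (n + 1) x =
          (β + n + 1) / β * hyp (β + 1) (n + 1) x - (n + 1) / β * hyp (β + 1) n x := by
        field_simp
        linear_combination hc
      rw [show 2 * (n + 1) - 1 = 2 * n + 1 by omega, ho, hc']
      push_cast at hR ⊢
      rw [pow_succ]
      linear_combination (-γ * x * (-γ) ^ n * hyp (β + 1) n x) * hS
        + (γ * x * (-γ) ^ n * hyp (β + 1) (n + 1) x) * hR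
  · rw [show 2 * n + 2 = 2 * (n + 1) by ring, he, he, ho, pow_succ]
    have hR := sqrt_mul_even_factor hβ n
    have hS := sqrt_succ_mul_even_factor hβ n
    have hc := hyp_contiguous_odd hβ n x
    linear_combination ((-γ) ^ n * √(poch (β + 1) n / (n.factorial * β))) * hc
      - ((-γ) ^ n * hyp β n x) * hR
      + (γ ^ 2 * (-γ) ^ n * hyp β (n + 1) x) * hS
      + (β * (-γ) ^ n * hyp β (n + 1) x * √(poch (β + 1) n / (n.factorial * β))) * hγ2
end
end

section
/- Fix real β > 0 and γ > 1. Let k, l ∈ ℕ, let ε, ε' ∈ {1, −1}, and set x = ε√(γ²−1)√k and y = ε'√(γ²−1)√l. Define, for n ∈ ℕ, Φ_{2n}(x) = (−1)^n γ^{−n−k−β} √((β)_n (β)_k / (2 n! k!)) (γ²−1)^{β/2} √(1+δ_{k,0}) M_n(k; β, 1/γ²); for k ≥ 1 define Φ_{2n+1}(x) = (−1)^n γ^{−n−k−β} √((β+1)_n (β)_k / (2β n! k!)) (γ²−1)^{β/2} · x · M_n(k−1; β+1, 1/γ²), and set Φ_{2n+1}(x) = 0 when k = 0; analogously for y with k,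 ε replaced by l, ε'. Then the complex series ∑_{n=0}^{∞} (−i)^n Φ_n(x) Φ_n(y) converges and equals (1/2)·(2γ/(1+γ²))^{k+l}·((γ²−1)/(γ²+1))^{β}·√((β)_k (β)_l / (k! l!))·√((1+δ_{k,0})(1+δ_{l,0})) · [ ₂F₁(−k, −l; β; −(1/4)(γ − 1/γ)²) − i·(xy(1+γ²)/(4βγ²))·₂F₁(−(k−1), −(l−1); β+1; −(1/4)(γ − 1/γ)²) ], where for k = 0 or l = 0 the second bracketed term is interpreted as 0 (its factor xy vanishes). -/
/-!
Even and odd indices are summed separately. In each of them the summand is, up to a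
factor independent of `n`, the general term of Meixner's bilinear generating function
`∑ (b)_n / n! · tⁿ M_n(k; b, c) M_n(l; b, c)` at `t = -c = -γ⁻²`, with `b = β` for even indices and
`b = β + 1`, `k - 1`, `l - 1` for odd ones (`hasSum_meixner_mul_special`, `term_mul`). What remains
is a comparison of constants.

The generating function (`hasSum_meixner_mul`) is a statement about moments of the negative binomial
weight `(b)_n / n! · tⁿ`. Read as a polynomial in `n`, `M_n(k; b, c)` is a combination of the falling
factorials `n(n-1)⋯(n-i+1)`, `i ≤ k` (`meixner_eq`), so the mixed factorial moments suffice. They are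
found in `hasSum_descFactorial_mul` by induction: the case of a single falling factorial is a shift
of the binomial series, and the identity
`n^{(i)} n^{(j+1)} = n^{(i+1)} n^{(j)} + (i - j) n^{(i)} n^{(j)}` raises `j`. The closed form obeys
the same recurrence (`mixedMoment_succ`), and summing it against binomial coefficients
(`sum_choose_mul_choose`) gives the hypergeometric sum.
-/

noncomputable section

open Finset

/-- Meixner polynomial `M_n(k; b, c)`. -/
def meixner (n : ℕ) (k b c : ℝ) : ℝ :=
  ∑ j ∈ range (n + 1),
    poch (-(n : ℝ)) j * poch (-k) j * (1 - 1 / c) ^ j / (poch b j * j.factorial)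

/-- Terminating Gauss hypergeometric sum `₂F₁(-k, -l; b; w)`. -/
def F21nn (k l : ℕ) (b w : ℝ) : ℝ :=
  ∑ j ∈ range (min k l + 1),
    poch (-(k : ℝ)) j * poch (-(l : ℝ)) j * w ^ j / (poch b j * j.factorial)

/-! ### Pochhammer symbols and falling factorials -/

lemma poch_pos_s12 {b : ℝ} (hb : 0 < b) (n : ℕ) : 0 < poch b n := by
  induction n with
  | zero => simp [poch]
  | succ n ih => rw [poch]; positivity

lemma poch_add (b : ℝ) (i m : ℕ) : poch b (m + i) = poch b i * poch (b + i) m := by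
  induction m with
  | zero => simp [poch]
  | succ m ih =>
    rw [show m + 1 + i = (m + i) + 1 by ring, poch, poch, ih]
    push_cast
    ring

lemma poch_eq_eval (b : ℝ) (n : ℕ) : poch b n = (ascPochhammer ℝ n).eval b := by
  induction n with
  | zero => simp [poch]
  | succ n ih => rw [poch, ascPochhammer_succ_eval, ih]

/-- No hypothesis `j ≤ n` is needed: for `j > n` both sides vanish. -/
lemma cast_descFactorial_succ (n j : ℕ) :
    (n.descFactorial (j + 1) : ℝ) = (n - j) * n.descFactorial j := by
  rw [Nat.descFactorial_succ]
  rcases le_or_gt j n with h | h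
  · push_cast [h]; ring
  · simp [Nat.descFactorial_of_lt h]

lemma poch_neg_nat (n j : ℕ) : poch (-(n : ℝ)) j = (-1) ^ j * n.descFactorial j := by
  induction j with
  | zero => simp [poch]
  | succ j ih => rw [poch, ih, cast_descFactorial_succ]; ring

/-! ### Factorial moments of the negative binomial weight -/

/-- Newton's binomial series for a negative exponent. -/
lemma hasSum_negBinomial (b : ℝ) {t : ℝ} (ht : |t| < 1) :
    HasSum (fun n : ℕ => poch b n / n.factorial * t ^ n) ((1 - t) ^ (-b)) := by
  have h := (Real.one_div_one_sub_rpow_hasFPowerSeriesOnBall_zero b).hasSum (y := t)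
    (by simpa [Metric.mem_eball, edist_eq_enorm_sub, ← ofReal_norm] using ht)
  have h1 : 0 < 1 - t := by linarith [(abs_lt.mp ht).2]
  rw [zero_add, one_div, ← Real.rpow_neg h1.le] at h
  convert! h using 2 with n
  have h2 := Ring.factorial_nsmul_multichoose_eq_ascPochhammer b n
  rw [Polynomial.ascPochhammer_smeval_eq_eval, ← poch_eq_eval, Ring.multichoose_eq, nsmul_eq_mul] at h2
  have h3 : (n.factorial : ℝ) ≠ 0 := by positivity
  simp only [FormalMultilinearSeries.ofScalars_apply_eq, smul_eq_mul, ← h2]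
  field_simp

/-- Factorial moments of the negative binomial weight: the terms `n < i` vanish, and the rest is the
binomial series with exponent `-(b + i)`. -/
lemma hasSum_descFactorial {b : ℝ} {t : ℝ} (ht : |t| < 1) (i : ℕ) :
    HasSum (fun n : ℕ => poch b n / n.factorial * t ^ n * n.descFactorial i)
      ((1 - t) ^ (-b) * ((t / (1 - t)) ^ i * poch b i)) := by
  have h1 : 0 < 1 - t := by linarith [(abs_lt.mp ht).2]
  rw [← hasSum_nat_add_iff' i, Finset.sum_eq_zero, sub_zero]
  · convert! (hasSum_negBinomial (b + i) ht).mul_left (poch b i * t ^ i) using 1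
    · funext m
      have h2 := Nat.factorial_mul_descFactorial (Nat.le_add_left i m)
      rw [Nat.add_sub_cancel] at h2
      have h3 : (m.factorial : ℝ) ≠ 0 := by positivity
      have h4 : (((m + i).descFactorial i : ℕ) : ℝ) ≠ 0 := by
        intro h0
        have h0 : (m + i).descFactorial i = 0 := by exact_mod_cast h0
        rw [Nat.descFactorial_eq_zero_iff_lt] at h0
        omega
      rw [poch_add, ← h2]
      push_cast
      field_simp
      ring
    · rw [neg_add, Real.rpow_add h1, Real.rpow_neg h1.le (i : ℝ), Real.rpow_natCast, div_pow]
      field_simp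
  · intro n hn
    rw [Nat.descFactorial_of_lt (Finset.mem_range.mp hn)]
    simp

/-- The sum `∑ m, C(i, m) j(j-1)⋯(j-m+1) s ^ m / (b)_m`, that is `₂F₁(-i, -j; b; s)`. At `s = 1 / t`
it is the mixed factorial moment of orders `i`, `j` of the weight `(b)_n / n! · tⁿ`, up to the
factor `(1 - t) ^ (-b) (t / (1 - t)) ^ (i + j) (b)_i (b)_j`. -/
def mixedMoment (b s : ℝ) (i j : ℕ) : ℝ :=
  ∑ m ∈ range (j + 1), (i.choose m : ℝ) * j.descFactorial m / poch b m * s ^ m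

lemma mixedMoment_eq (b s : ℝ) (i : ℕ) {j N : ℕ} (h : j < N) :
    mixedMoment b s i j =
      ∑ m ∈ range N, (i.choose m : ℝ) * j.descFactorial m / poch b m * s ^ m := by
  refine Finset.sum_subset (Finset.range_mono h) fun m _ hm => ?_
  rw [Nat.descFactorial_of_lt (by simpa using hm)]
  simp

/-- Comparison of the coefficients of `s ^ (m + 1)` in `mixedMoment_succ`. -/
lemma mixedMoment_coeff (b : ℝ) (i j m : ℕ) :
    (b + j) * (i.choose (m + 1) * (j + 1).descFactorial (m + 1))
      - (b + i) * ((i + 1).choose (m + 1) * j.descFactorial (m + 1))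
      + (i - j) * (i.choose (m + 1) * j.descFactorial (m + 1))
      = ((i : ℝ) - j) * (b + m) * (i.choose m * j.descFactorial m) := by
  have h1 : (i.choose (m + 1) : ℝ) = i.choose m * (i - m) / (m + 1) := by
    rw [eq_div_iff (by positivity)]
    have := Nat.choose_succ_right_eq i m
    rcases le_or_gt m i with h | h
    · have h2 : ((i.choose (m + 1) * (m + 1) : ℕ) : ℝ) = (i.choose m * (i - m) : ℕ) := by rw [this]
      push_cast [h] at h2
      exact h2
    · simp [Nat.choose_eq_zero_of_lt h, Nat.choose_eq_zero_of_lt (Nat.lt_succ_of_lt h)]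
  rw [Nat.choose_succ_succ, Nat.succ_descFactorial_succ, cast_descFactorial_succ]
  push_cast
  rw [h1]
  field_simp
  ring

/-- The contiguous relation corresponding to
`n^{(i)} n^{(j+1)} = n^{(i+1)} n^{(j)} + (i - j) n^{(i)} n^{(j)}` for falling factorials. -/
lemma mixedMoment_succ {b : ℝ} (hb : 0 < b) (s : ℝ) (i j : ℕ) :
    (b + j) * mixedMoment b s i (j + 1) =
      (b + i) * mixedMoment b s (i + 1) j + (i - j) * (s - 1) * mixedMoment b s i j := by
  -- the terms with factor `s` are isolated, so that `sum_range_succ'` aligns the powers of `s`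
  have key : (b + j) * mixedMoment b s i (j + 1) - (b + i) * mixedMoment b s (i + 1) j
      + (i - j) * mixedMoment b s i j = (i - j) * s * mixedMoment b s i j := by
    rw [mixedMoment_eq b s i (show j + 1 < j + 2 by omega),
      mixedMoment_eq b s (i + 1) (show j < j + 2 by omega)]
    conv_lhs => rw [mixedMoment_eq b s i (show j < j + 2 by omega)]
    rw [mixedMoment, mul_sum, mul_sum, mul_sum, mul_sum, ← sum_sub_distrib, ← sum_add_distrib,
      sum_range_succ']
    refine Eq.trans (congrArg₂ (· + ·) ?_ ?_) (add_zero _)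
    · refine sum_congr rfl fun m _ => ?_
      have h1 := (poch_pos_s12 hb m).ne'
      have h2 : b + m ≠ 0 := by positivity
      have h3 := mixedMoment_coeff b i j m
      rw [poch, pow_succ]
      field_simp
      linear_combination (s ^ m * s) * h3
    · simp [poch]
  linear_combination key

/-- Mixed factorial moments of the negative binomial weight, by induction on `j` for all `i` at
once. -/
lemma hasSum_descFactorial_mul {b : ℝ} (hb : 0 < b) {t : ℝ} (ht : |t| < 1) (ht0 : t ≠ 0)
    (i j : ℕ) :
    HasSum (fun n : ℕ => poch b n / n.factorial * t ^ n * n.descFactorial i * n.descFactorial j)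
      ((1 - t) ^ (-b) *
        ((t / (1 - t)) ^ (i + j) * (poch b i * poch b j * mixedMoment b (1 / t) i j))) := by
  have h1 : 1 - t ≠ 0 := by linarith [(abs_lt.mp ht).2]
  induction j generalizing i with
  | zero => simpa [mixedMoment, poch] using hasSum_descFactorial (b := b) ht i
  | succ j ih =>
    convert! (ih (i + 1)).add ((ih i).mul_left ((i : ℝ) - j)) using 1
    · funext n
      rw [cast_descFactorial_succ, cast_descFactorial_succ]
      ring
    · have h2 := mixedMoment_succ hb (1 / t) i j
      -- `1 / t - 1` is the inverse of `t / (1 - t)`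
      have h3 : (t / (1 - t)) * (1 / t - 1) = 1 := by field_simp
      rw [poch, poch, show i + 1 + j = i + j + 1 by ring, ← add_assoc, pow_succ]
      generalize t / (1 - t) = q at *
      generalize mixedMoment b (1 / t) i j = A at *
      generalize mixedMoment b (1 / t) i (j + 1) = B at *
      generalize mixedMoment b (1 / t) (i + 1) j = C at *
      linear_combination ((1 - t) ^ (-b) * q ^ (i + j) * q * poch b i * poch b j) * h2 +
        ((1 - t) ^ (-b) * q ^ (i + j) * poch b i * poch b j * (i - j) * A) * h3

/-! ### Meixner's bilinear generating function -/

lemma sum_choose_mul_choose (k m : ℕ) (z : ℝ) (hz : 1 + z ≠ 0) :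
    ∑ i ∈ range (k + 1), (k.choose i : ℝ) * i.choose m * z ^ i =
      k.choose m * (z / (1 + z)) ^ m * (1 + z) ^ k := by
  rcases le_or_gt m k with h | h
  -- `C(k, i) C(i, m) = C(k, m) C(k - m, i - m)` turns the sum into a binomial expansion
  · obtain ⟨d, rfl⟩ := Nat.exists_eq_add_of_le h
    rw [add_assoc, sum_range_add, sum_eq_zero, zero_add]
    · have : ∀ e ∈ range (d + 1), ((m + d).choose (m + e) : ℝ) * (m + e).choose m * z ^ (m + e)
          = ((m + d).choose m * z ^ m) * (z ^ e * 1 ^ (d - e) * d.choose e) := by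
        intro e _
        have := Nat.choose_mul (n := m + d) (k := m + e) (s := m) (by omega)
        rw [show m + d - m = d by omega, show m + e - m = e by omega] at this
        have h2 : (((m + d).choose (m + e) * (m + e).choose m : ℕ) : ℝ)
          = ((m + d).choose m * d.choose e : ℕ) := by rw [this]
        push_cast at h2
        rw [h2, pow_add]
        ring
      rw [sum_congr rfl this, ← mul_sum, ← add_pow, div_pow, pow_add, add_comm z 1]
      field_simp
    · intro i hi
      rw [Nat.choose_eq_zero_of_lt (Finset.mem_range.mp hi)]
      simp
  · rw [sum_eq_zero, Nat.choose_eq_zero_of_lt h]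
    · simp
    · intro i hi
      rw [Nat.choose_eq_zero_of_lt (show i < m by have := Finset.mem_range.mp hi; omega)]
      simp

/-- Self-duality: for a natural number argument the Meixner sum may be cut off at `k`. -/
lemma meixner_eq (n k : ℕ) (b c : ℝ) :
    meixner n k b c =
      ∑ i ∈ range (k + 1), (k.choose i : ℝ) * (1 - 1 / c) ^ i / poch b i * n.descFactorial i := by
  have e : ∀ i, poch (-(n : ℝ)) i * poch (-(k : ℝ)) i * (1 - 1 / c) ^ i / (poch b i * i.factorial)
      = (k.choose i : ℝ) * (1 - 1 / c) ^ i / poch b i * n.descFactorial i := by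
    intro i
    have h : (i.factorial : ℝ) ≠ 0 := by positivity
    rw [poch_neg_nat, poch_neg_nat, Nat.descFactorial_eq_factorial_mul_choose k]
    have h2 : ((-1 : ℝ) ^ i) * (-1) ^ i = 1 := by rw [← mul_pow]; simp
    push_cast
    rw [mul_comm (poch b i), ← div_div, eq_comm, eq_comm]
    field_simp
    linear_combination ((n.descFactorial i : ℝ) * (k.choose i) * (1 - 1 / c) ^ i / poch b i) * h2
  rw [meixner, sum_congr rfl fun i _ => e i]
  rcases le_total n k with h | h
  · refine sum_subset (range_mono (by omega)) fun i _ hi => ?_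
    rw [Nat.descFactorial_of_lt (by simpa using hi)]; simp
  · refine (sum_subset (range_mono (by omega)) fun i _ hi => ?_).symm
    rw [Nat.choose_eq_zero_of_lt (by simpa using hi)]; simp

lemma F21nn_eq (k l : ℕ) (b w : ℝ) : F21nn k l b w = mixedMoment b w k l := by
  rw [F21nn, mixedMoment]
  have e : ∀ i, poch (-(k : ℝ)) i * poch (-(l : ℝ)) i * w ^ i / (poch b i * i.factorial)
      = (k.choose i : ℝ) * l.descFactorial i / poch b i * w ^ i := by
    intro i
    have h : (i.factorial : ℝ) ≠ 0 := by positivity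
    rw [poch_neg_nat, poch_neg_nat, Nat.descFactorial_eq_factorial_mul_choose k]
    have h2 : ((-1 : ℝ) ^ i) * (-1) ^ i = 1 := by rw [← mul_pow]; simp
    push_cast
    rw [mul_comm (poch b i), ← div_div]
    field_simp
    linear_combination ((l.descFactorial i : ℝ) * (k.choose i) * w ^ i / poch b i) * h2
  rw [sum_congr rfl fun i _ => e i]
  refine sum_subset (range_mono (by omega)) fun i h1 hi => ?_
  rw [Nat.choose_eq_zero_of_lt (by simp at h1 hi; omega)]; simp

/-- A summand of the moment expansion of `hasSum_meixner_mul`, with the dependence on `i` and `j`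
separated inside the sum over `m`. -/
lemma mixedMoment_weighted {b : ℝ} (hb : 0 < b) (p s u q : ℝ) (k l i j : ℕ) (hj : j < l + 1) :
    (k.choose i : ℝ) * u ^ i / poch b i * ((l.choose j : ℝ) * u ^ j / poch b j) *
        (p * (q ^ (i + j) * (poch b i * poch b j * mixedMoment b s i j)))
      = ∑ m ∈ range (l + 1), p * (m.factorial / poch b m * s ^ m *
        ((k.choose i * i.choose m * (u * q) ^ i) * (l.choose j * j.choose m * (u * q) ^ j))) := by
  rw [mixedMoment_eq b _ i hj, mul_sum, mul_sum, mul_sum, mul_sum]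
  refine sum_congr rfl fun m _ => ?_
  have h1 := mul_inv_cancel₀ (poch_pos_s12 hb i).ne'
  have h2 := mul_inv_cancel₀ (poch_pos_s12 hb j).ne'
  rw [Nat.descFactorial_eq_factorial_mul_choose j]
  push_cast
  calc _ = (poch b i * (poch b i)⁻¹) * (poch b j * (poch b j)⁻¹) *
        (p * (m.factorial / poch b m * s ^ m *
        ((k.choose i * i.choose m * (u * q) ^ i) * (l.choose j * j.choose m * (u * q) ^ j)))) := by
        ring
    _ = _ := by rw [h1, h2, one_mul, one_mul]

/-- Meixner's bilinear generating function. The auxiliary `z` satisfies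
`1 + z = (1 - t / c) / (1 - t)` when `c ≠ 0`; both `t` and `1 + z` occur in denominators. -/
lemma hasSum_meixner_mul {b : ℝ} (hb : 0 < b) {t : ℝ} (ht : |t| < 1) (ht0 : t ≠ 0) (c z : ℝ)
    (hz : z = (1 - 1 / c) * (t / (1 - t))) (hz1 : 1 + z ≠ 0) (k l : ℕ) :
    HasSum (fun n : ℕ => poch b n / n.factorial * t ^ n * (meixner n k b c * meixner n l b c))
      ((1 - t) ^ (-b) * ((1 + z) ^ (k + l) * F21nn k l b (1 / t * (z / (1 + z)) ^ 2))) := by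
  have H := hasSum_sum (s := range (k + 1)) fun i _ => hasSum_sum (s := range (l + 1)) fun j _ =>
    (hasSum_descFactorial_mul hb ht ht0 i j).mul_left
      ((k.choose i : ℝ) * (1 - 1 / c) ^ i / poch b i *
        ((l.choose j : ℝ) * (1 - 1 / c) ^ j / poch b j))
  convert! H using 1
  · funext n
    rw [meixner_eq, meixner_eq, sum_mul_sum, mul_sum]
    refine sum_congr rfl fun i _ => ?_
    rw [mul_sum]
    refine sum_congr rfl fun j _ => ?_
    ring
  · rw [F21nn_eq, mixedMoment]
    have e := fun i j (hj : j ∈ range (l + 1)) =>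
      mixedMoment_weighted hb ((1 - t) ^ (-b)) (1 / t) (1 - 1 / c) (t / (1 - t)) k l i j
        (Finset.mem_range.mp hj)
    rw [← hz] at e
    rw [sum_congr rfl fun i _ => sum_congr rfl fun j hj => e i j hj]
    rw [sum_congr rfl fun i _ => sum_comm, sum_comm]
    rw [mul_sum, mul_sum]
    refine sum_congr rfl fun m _ => ?_
    simp_rw [← mul_sum]
    rw [← sum_mul, sum_choose_mul_choose k m z hz1, sum_choose_mul_choose l m z hz1,
      Nat.descFactorial_eq_factorial_mul_choose l, mul_pow, pow_add]
    push_cast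
    ring

/-- The bilinear generating function at `t = -c = -γ⁻²`. -/
lemma hasSum_meixner_mul_special {b γ : ℝ} (hb : 0 < b) (hγ : 1 < γ) (k l : ℕ) :
    HasSum (fun n : ℕ => poch b n / n.factorial * (-(1 / γ ^ 2)) ^ n *
        (meixner n k b (1 / γ ^ 2) * meixner n l b (1 / γ ^ 2)))
      ((γ ^ 2 / (1 + γ ^ 2)) ^ b * ((2 * γ ^ 2 / (1 + γ ^ 2)) ^ (k + l) *
        F21nn k l b (-(1 / 4) * (γ - 1 / γ) ^ 2))) := by
  have h0 : 0 < γ := by linarith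
  have h1 : 1 < γ ^ 2 := by nlinarith
  have ht : |(-(1 / γ ^ 2))| < 1 := by
    rw [abs_neg, abs_of_pos (by positivity), div_lt_one (by positivity)]
    exact h1
  have hz1 : 1 + (γ ^ 2 - 1) / (1 + γ ^ 2) = 2 * γ ^ 2 / (1 + γ ^ 2) := by field_simp; ring
  convert! hasSum_meixner_mul hb ht (by simp; positivity) (1 / γ ^ 2)
    ((γ ^ 2 - 1) / (1 + γ ^ 2)) ?_ ?_ k l using 2
  · rw [show 1 - -(1 / γ ^ 2) = (γ ^ 2 / (1 + γ ^ 2))⁻¹ by field_simp; ring,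
      Real.inv_rpow (by positivity), Real.rpow_neg (by positivity), inv_inv]
  · rw [hz1]
    congr 2
    field_simp
    ring
  · rw [show 1 - -(1 / γ ^ 2) = (1 + γ ^ 2) / γ ^ 2 by field_simp; ring]
    field_simp
    ring
  · rw [hz1]; positivity

/-! ### The Fourier kernel -/

lemma rpow_split {γ : ℝ} (hγ : 0 < γ) (n k : ℕ) (β : ℝ) :
    γ ^ (-(n : ℝ) - k - β) = (γ ^ n)⁻¹ * (γ ^ k)⁻¹ * (γ ^ β)⁻¹ := by
  rw [Real.rpow_sub hγ, Real.rpow_sub hγ, Real.rpow_neg hγ.le, Real.rpow_natCast,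
    Real.rpow_natCast]
  rfl

/-- The term with index `2 n`, or `2 n + 1` up to the factor `-i`, of the kernel series. Here `w` is the part of the radicand
depending on `n`, `A` and `B` are its parts depending on `k` and `l`, `X` and `Y` are the remaining
factors (the square roots of `1 + δ` for even index, the variables `x` and `y` for odd index), and
`M` and `N` are the Meixner values. -/
lemma term_mul {γ : ℝ} (hγ : 1 < γ) (β : ℝ) (n k l : ℕ) {w : ℝ} (hw : 0 ≤ w) (A B X Y M N : ℝ) :
    (-1) ^ n * ((-1) ^ n * γ ^ (-(n : ℝ) - k - β) * √(w * A) * (γ ^ 2 - 1) ^ (β / 2) * X * M) *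
      ((-1) ^ n * γ ^ (-(n : ℝ) - l - β) * √(w * B) * (γ ^ 2 - 1) ^ (β / 2) * Y * N) =
    ((γ ^ β)⁻¹ ^ 2 * (γ ^ 2 - 1) ^ β * ((γ ^ k)⁻¹ * (γ ^ l)⁻¹) * (√A * √B) * (X * Y)) *
      (w * (-(1 / γ ^ 2)) ^ n * (M * N)) := by
  have h0 : 0 < γ := by linarith
  have h1 : 0 < γ ^ 2 - 1 := by nlinarith
  have h2 : (γ ^ 2 - 1) ^ β = (γ ^ 2 - 1) ^ (β / 2) * (γ ^ 2 - 1) ^ (β / 2) := by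
    rw [← Real.rpow_add h1, add_halves]
  have h3 : (-(1 / γ ^ 2)) ^ n = (-1) ^ n * ((γ ^ n)⁻¹ * (γ ^ n)⁻¹) := by
    rw [neg_pow, one_div, inv_pow, ← pow_mul, mul_comm 2 n, pow_mul, sq, mul_inv]
  have h4 : ((-1 : ℝ) ^ n) * (-1) ^ n = 1 := by rw [← mul_pow]; simp
  have h5 := Real.mul_self_sqrt hw
  rw [rpow_split h0, rpow_split h0, Real.sqrt_mul hw, Real.sqrt_mul hw, h2, h3]
  calc _ = (((-1 : ℝ) ^ n) * (-1) ^ n) * (√w * √w) * ((γ ^ β)⁻¹ ^ 2 *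
      ((γ ^ 2 - 1) ^ (β / 2) * (γ ^ 2 - 1) ^ (β / 2)) *
      ((γ ^ k)⁻¹ * (γ ^ l)⁻¹) * (√A * √B) * (X * Y)) *
      ((-1) ^ n * ((γ ^ n)⁻¹ * (γ ^ n)⁻¹) * (M * N)) := by ring
    _ = _ := by rw [h4, h5]; ring

/-- The factors with exponent `β` combine. -/
lemma rpow_const {γ : ℝ} (hγ : 1 < γ) (β : ℝ) :
    (γ ^ β)⁻¹ ^ 2 * (γ ^ 2 - 1) ^ β * (γ ^ 2 / (1 + γ ^ 2)) ^ β =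
      ((γ ^ 2 - 1) / (γ ^ 2 + 1)) ^ β := by
  have h0 : 0 < γ := by linarith
  have h1 : 0 < γ ^ 2 - 1 := by nlinarith
  have h2 : (γ ^ 2) ^ β = γ ^ β * γ ^ β := by rw [sq, Real.mul_rpow h0.le h0.le]
  have h3 : γ ^ β ≠ 0 := (Real.rpow_pos_of_pos h0 β).ne'
  rw [Real.div_rpow (by positivity) (by positivity), Real.div_rpow h1.le (by positivity), h2,
    add_comm 1]
  field_simp

/-- The factors with exponents `k` and `l` combine. -/
lemma pow_const {γ : ℝ} (hγ : 1 < γ) (k l : ℕ) :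
    (γ ^ k)⁻¹ * (γ ^ l)⁻¹ * (2 * γ ^ 2 / (1 + γ ^ 2)) ^ (k + l) =
      (2 * γ / (1 + γ ^ 2)) ^ (k + l) := by
  have h0 : γ ≠ 0 := by linarith
  rw [← mul_inv, ← pow_add, ← inv_pow, ← mul_pow]
  congr 1
  field_simp

theorem stmt_12 (β γ : ℝ) (hβ : 0 < β) (hγ : 1 < γ)
    (k l : ℕ) (ε ε' : ℝ) (hε : ε = 1 ∨ ε = -1) (hε' : ε' = 1 ∨ ε' = -1)
    (x y : ℝ)
    (hx : x = ε * Real.sqrt (γ ^ 2 - 1) * Real.sqrt k)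
    (hy : y = ε' * Real.sqrt (γ ^ 2 - 1) * Real.sqrt l)
    (Φx Φy : ℕ → ℝ)
    (hΦxe : ∀ n : ℕ, Φx (2 * n) = (-1) ^ n * γ ^ (-(n : ℝ) - k - β) *
      Real.sqrt (poch β n * poch β k / (2 * n.factorial * k.factorial)) *
      (γ ^ 2 - 1) ^ (β / 2) * Real.sqrt (1 + (if k = 0 then (1 : ℝ) else 0)) *
      meixner n k β (1 / γ ^ 2))
    (hΦxo : ∀ n : ℕ, Φx (2 * n + 1) = if k = 0 then 0 else
      (-1) ^ n * γ ^ (-(n : ℝ) - k - β) *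
      Real.sqrt (poch (β + 1) n * poch β k / (2 * β * n.factorial * k.factorial)) *
      (γ ^ 2 - 1) ^ (β / 2) * x * meixner n ((k : ℝ) - 1) (β + 1) (1 / γ ^ 2))
    (hΦye : ∀ n : ℕ, Φy (2 * n) = (-1) ^ n * γ ^ (-(n : ℝ) - l - β) *
      Real.sqrt (poch β n * poch β l / (2 * n.factorial * l.factorial)) *
      (γ ^ 2 - 1) ^ (β / 2) * Real.sqrt (1 + (if l = 0 then (1 : ℝ) else 0)) *
      meixner n l β (1 / γ ^ 2))
    (hΦyo : ∀ n : ℕ, Φy (2 * n + 1) = if l = 0 then 0 else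
      (-1) ^ n * γ ^ (-(n : ℝ) - l - β) *
      Real.sqrt (poch (β + 1) n * poch β l / (2 * β * n.factorial * l.factorial)) *
      (γ ^ 2 - 1) ^ (β / 2) * y * meixner n ((l : ℝ) - 1) (β + 1) (1 / γ ^ 2)) :
    HasSum (fun n : ℕ => (-Complex.I) ^ n * (Φx n : ℂ) * (Φy n : ℂ))
      ((((1 / 2) * (2 * γ / (1 + γ ^ 2)) ^ (k + l) * ((γ ^ 2 - 1) / (γ ^ 2 + 1)) ^ β *
          Real.sqrt (poch β k * poch β l / (k.factorial * l.factorial)) *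
          Real.sqrt ((1 + (if k = 0 then (1 : ℝ) else 0)) *
            (1 + (if l = 0 then (1 : ℝ) else 0))) : ℝ) : ℂ) *
        ((F21nn k l β (-(1 / 4) * (γ - 1 / γ) ^ 2) : ℝ) -
          Complex.I * ((x * y * (1 + γ ^ 2) / (4 * β * γ ^ 2) : ℝ) : ℂ) *
            ((F21nn (k - 1) (l - 1) (β + 1) (-(1 / 4) * (γ - 1 / γ) ^ 2) : ℝ) : ℂ))) := by
  have hpk := poch_pos_s12 hβ k
  have hpl := poch_pos_s12 hβ l
  have hδk : (0 : ℝ) ≤ 1 + (if k = 0 then (1 : ℝ) else 0) := by split_ifs <;> norm_num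
  have hsq : √(poch β k * poch β l / (k.factorial * l.factorial)) =
      √(poch β k / k.factorial) * √(poch β l / l.factorial) := by
    rw [← Real.sqrt_mul (by positivity), div_mul_div_comm]
  rw [hsq, Real.sqrt_mul hδk]
  set F := F21nn k l β (-(1 / 4) * (γ - 1 / γ) ^ 2) with hF
  set G := F21nn (k - 1) (l - 1) (β + 1) (-(1 / 4) * (γ - 1 / γ) ^ 2) with hG
  set C : ℝ := 1 / 2 * (2 * γ / (1 + γ ^ 2)) ^ (k + l) * ((γ ^ 2 - 1) / (γ ^ 2 + 1)) ^ β *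
    (√(poch β k / k.factorial) * √(poch β l / l.factorial)) *
    (√(1 + (if k = 0 then (1 : ℝ) else 0)) * √(1 + (if l = 0 then (1 : ℝ) else 0))) with hC
  have even : HasSum (fun n : ℕ => (-1) ^ n * Φx (2 * n) * Φy (2 * n)) (C * F) := by
    convert! (hasSum_meixner_mul_special hβ hγ k l).mul_left
      (1 / 2 * ((γ ^ β)⁻¹ ^ 2 * (γ ^ 2 - 1) ^ β * ((γ ^ k)⁻¹ * (γ ^ l)⁻¹) *
        (√(poch β k / k.factorial) * √(poch β l / l.factorial)) *
        (√(1 + (if k = 0 then (1 : ℝ) else 0)) * √(1 + (if l = 0 then (1 : ℝ) else 0)))))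
      using 1
    · funext n
      have hpn := poch_pos_s12 hβ n
      have h := fun m : ℕ => show poch β n * poch β m / (2 * n.factorial * m.factorial) =
        (poch β n / (2 * n.factorial)) * (poch β m / m.factorial) by rw [div_mul_div_comm]
      rw [hΦxe, hΦye, h, h, term_mul hγ β n k l (by positivity)]
      field_simp
    · rw [hC, ← rpow_const hγ, ← pow_const hγ]
      ring
  have odd : HasSum (fun n : ℕ => (-1) ^ n * Φx (2 * n + 1) * Φy (2 * n + 1))
      (C * (x * y * (1 + γ ^ 2) / (4 * β * γ ^ 2)) * G) := by
    -- for `k = 0` or `l = 0` all terms vanish, and so does `x * y`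
    rcases Nat.eq_zero_or_pos k with hk | hk
    · convert! (hasSum_zero : HasSum (fun _ : ℕ => (0 : ℝ)) 0) using 1
      · funext n; simp [hΦxo, hk]
      · simp [hx, hk]
    rcases Nat.eq_zero_or_pos l with hl | hl
    · convert! (hasSum_zero : HasSum (fun _ : ℕ => (0 : ℝ)) 0) using 1
      · funext n; simp [hΦyo, hl]
      · simp [hy, hl]
    convert! (hasSum_meixner_mul_special (b := β + 1) (by linarith) hγ (k - 1) (l - 1)).mul_left
      (1 / (2 * β) * ((γ ^ β)⁻¹ ^ 2 * (γ ^ 2 - 1) ^ β * ((γ ^ k)⁻¹ * (γ ^ l)⁻¹) *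
        (√(poch β k / k.factorial) * √(poch β l / l.factorial)) * (x * y)))
      using 1
    · funext n
      have hpn := poch_pos_s12 (b := β + 1) (by linarith) n
      have h := fun m : ℕ =>
        show poch (β + 1) n * poch β m / (2 * β * n.factorial * m.factorial) =
        (poch (β + 1) n / (2 * β * n.factorial)) * (poch β m / m.factorial) by
          rw [div_mul_div_comm]
      rw [hΦxo, hΦyo, if_neg hk.ne', if_neg hl.ne', h, h, term_mul hγ β n k l (by positivity),
        Nat.cast_pred hk, Nat.cast_pred hl]
      field_simp
    · have hg : γ ≠ 0 := by linarith
      have hg2 : 0 < γ ^ 2 / (1 + γ ^ 2) := by positivity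
      rw [← hG, hC, ← rpow_const hγ, ← pow_const hγ, if_neg hk.ne', if_neg hl.ne',
        Real.rpow_add_one hg2.ne', show k + l = (k - 1) + (l - 1) + 2 by omega, pow_add _ _ 2]
      generalize (2 * γ ^ 2 / (1 + γ ^ 2)) ^ (k - 1 + (l - 1)) = p
      generalize (γ ^ 2 / (1 + γ ^ 2)) ^ β = q
      rw [add_zero, Real.sqrt_one]
      field_simp
      ring
  have h1 := Complex.hasSum_ofReal.mpr even
  have h2 := (Complex.hasSum_ofReal.mpr odd).mul_left (-Complex.I)
  convert! HasSum.even_add_odd (f := fun n : ℕ => (-Complex.I) ^ n * (Φx n : ℂ) * (Φy n : ℂ))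
    (m := ((C * F : ℝ) : ℂ)) (m' := -Complex.I *
      ((C * (x * y * (1 + γ ^ 2) / (4 * β * γ ^ 2)) * G : ℝ) : ℂ)) ?_ ?_ using 1
  · push_cast
    ring
  · convert! h1 using 2 with n
    rw [pow_mul, neg_sq, Complex.I_sq]
    push_cast
    ring
  · convert! h2 using 2 with n
    rw [pow_succ, pow_mul, neg_sq, Complex.I_sq]
    push_cast
    ring
end
end
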